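/- Let T_1 be the tree on the 7 vertices {x, u₁, a₁, b₁, u₂, a₂, b₂} with edges xu₁, u₁a₁, u₁b₁, xu₂, u₂a₂, u₂b₂ (two 3-stars appended by a leaf each onto a common vertex x). Then γ^ID(T_1) = 5 = (2/3)·7 + 1/3. -/

import Mathlib

open SimpleGraph

/-- The closed neighborhood `N[v]` of a vertex `v` in `G`. -/
def closedNbhd {V : Type*} (G : SimpleGraph V) (v : V) : Set V :=
  insert v (G.neighborSet v)

/-- `C` is an identifying code of `G`: it dominates every vertex and the
closed neighborhoods of distinct vertices intersect `C` differently. -/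
def IsIDCode {V : Type*} (G : SimpleGraph V) (C : Set V) : Prop :=
  (∀ v, (closedNbhd G v ∩ C).Nonempty) ∧
  ∀ u w : V, u ≠ w → closedNbhd G u ∩ C ≠ closedNbhd G w ∩ C

/-- The identification number `γ^ID(G)`: the minimum size of an identifying code. -/
noncomputable def idNum {V : Type*} [Fintype V] (G : SimpleGraph V) : ℕ :=
  sInf {k | ∃ C : Set V, C.ncard = k ∧ IsIDCode G C}

/-- `G` is identifiable (closed-twin-free). -/
def Identifiable {V : Type*} (G : SimpleGraph V) : Prop :=
  ∀ u w : V, u ≠ w → closedNbhd G u ≠ closedNbhd G w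

/-- The maximum degree of a finite graph `G`. -/
noncomputable def maxDeg {V : Type*} [Fintype V] (G : SimpleGraph V) : ℕ :=
  Finset.univ.sup fun v => (G.neighborSet v).ncard

/-- `S` is a dominating set of `G`. -/
def IsDomSet {V : Type*} (G : SimpleGraph V) (S : Set V) : Prop :=
  ∀ v, (closedNbhd G v ∩ S).Nonempty

/-- The domination number `γ(G)`. -/
noncomputable def domNum {V : Type*} [Fintype V] (G : SimpleGraph V) : ℕ :=
  sInf {k | ∃ S : Set V, S.ncard = k ∧ IsDomSet G S}

/-- The star `K_{1,k}`: vertex `0` is adjacent to each of the `k` other vertices. -/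
def starGraph (k : ℕ) : SimpleGraph (Fin (k + 1)) :=
  SimpleGraph.fromRel fun a _ => a = 0

/-- The graph obtained from `G'` by appending a star with `k` extra leaves onto the
vertex `v`: we add a new universal vertex `u = Sum.inr none` adjacent to `v`,
and `k` new leaves `Sum.inr (some i)` adjacent to `u` (so the star has `k + 1`
leaves in total, one of which is identified with `v`, i.e. a `(k+1)`-star is
appended by one of its leaves onto `v`). -/
def appendStar {V : Type*} (G' : SimpleGraph V) (v : V) (k : ℕ) :
    SimpleGraph (V ⊕ Option (Fin k)) :=
  SimpleGraph.fromRel fun a b =>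
    (∃ x y, a = Sum.inl x ∧ b = Sum.inl y ∧ G'.Adj x y) ∨
    (a = Sum.inl v ∧ b = Sum.inr none) ∨
    (∃ i, a = Sum.inr none ∧ b = Sum.inr (some i))

/-- The tree `T₁`: two 3-stars appended by a leaf each onto a common vertex `x = 0`;
`u₁ = 1`, `a₁ = 2`, `b₁ = 3`, `u₂ = 4`, `a₂ = 5`, `b₂ = 6`. -/
def T1graph : SimpleGraph (Fin 7) :=
  SimpleGraph.fromEdgeSet {s(0, 1), s(1, 2), s(1, 3), s(0, 4), s(4, 5), s(4, 6)}

/-!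
Let every neighbour `u` of `x` be the centre of a star with two leaves besides `x`. A code omits at
most one of these leaves, and if it omits one it contains `u` to dominate it, so it meets
`N[u] \ {x}` at least twice. These sets are disjoint for distinct `u` and avoid `x`, so a code
containing `x` has more than `2 * deg x` elements. A code not containing `x` contains a neighbour
`u` to dominate `x`; separating `u` from each of its two leaves then puts the other leaf into the
code, and `N[u] \ {x}` contributes three elements.
-/

variable {V : Type*} {G : SimpleGraph V} {C : Set V} {u v w x a b : V} {k : ℕ}

theorem mem_closedNbhd : w ∈ closedNbhd G v ↔ w = v ∨ G.Adj v w :=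
  Iff.rfl

instance [DecidableEq V] [DecidableRel G.Adj] (v : V) : DecidablePred (· ∈ closedNbhd G v) :=
  fun _ ↦ decidable_of_iff' _ mem_closedNbhd

theorem isIDCode_iff_forall_exists_mem :
    IsIDCode G C ↔ (∀ v, ∃ w ∈ C, w ∈ closedNbhd G v) ∧
      ∀ u v, u ≠ v → ∃ w ∈ C, ¬(w ∈ closedNbhd G u ↔ w ∈ closedNbhd G v) := by
  simp only [IsIDCode, Set.inter_nonempty_iff_exists_right, ne_eq, Set.ext_iff, Set.mem_inter_iff,
    and_congr_left_iff, not_forall, exists_prop]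

theorem IsIDCode.exists_mem_closedNbhd (hC : IsIDCode G C) (v : V) :
    ∃ w ∈ C, w ∈ closedNbhd G v :=
  (isIDCode_iff_forall_exists_mem.1 hC).1 v

theorem IsIDCode.exists_mem_not_iff (hC : IsIDCode G C) (huv : u ≠ v) :
    ∃ w ∈ C, ¬(w ∈ closedNbhd G u ↔ w ∈ closedNbhd G v) :=
  (isIDCode_iff_forall_exists_mem.1 hC).2 u v huv

theorem idNum_eq_ncard [Fintype V] (hC : IsIDCode G C)
    (hmin : ∀ D, IsIDCode G D → C.ncard ≤ D.ncard) : idNum G = C.ncard := by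
  apply IsLeast.csInf_eq
  refine ⟨⟨C, rfl, hC⟩, ?_⟩
  rintro _ ⟨D, rfl, hD⟩
  exact hmin D hD

theorem closedNbhd_eq_pair_of_neighborSet_eq_singleton (ha : G.neighborSet a = {u}) :
    closedNbhd G a = {a, u} := by
  rw [closedNbhd, ha]

theorem ne_of_neighborSet_eq_singleton (ha : G.neighborSet a = {u}) : a ≠ u := by
  have hau : u ∈ G.neighborSet a := ha ▸ Set.mem_singleton u
  exact hau.ne

theorem neighborSet_ne_singleton_of_adj (hu : G.Adj x u) (hv : G.Adj x v) :
    G.neighborSet u ≠ {v} := by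
  intro h
  have hx : x ∈ ({v} : Set V) := h ▸ hu.symm
  exact hv.ne hx

theorem IsIDCode.mem_or_mem_of_leaf (hC : IsIDCode G C) (ha : G.neighborSet a = {u}) :
    a ∈ C ∨ u ∈ C := by
  obtain ⟨w, hwC, hw⟩ := hC.exists_mem_closedNbhd a
  rw [closedNbhd_eq_pair_of_neighborSet_eq_singleton ha] at hw
  rcases hw with rfl | rfl
  exacts [.inl hwC, .inr hwC]

theorem IsIDCode.subsingleton_leaves_sdiff (hC : IsIDCode G C) {L : Set V}
    (hL : ∀ a ∈ L, G.neighborSet a = {u}) : (L \ C).Subsingleton := by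
  rintro a ⟨haL, haC⟩ b ⟨hbL, hbC⟩
  by_contra hab
  obtain ⟨w, hwC, hw⟩ := hC.exists_mem_not_iff hab
  have hwa : w ≠ a := ne_of_mem_of_not_mem hwC haC
  have hwb : w ≠ b := ne_of_mem_of_not_mem hwC hbC
  simp [closedNbhd_eq_pair_of_neighborSet_eq_singleton (hL _ haL),
    closedNbhd_eq_pair_of_neighborSet_eq_singleton (hL _ hbL), hwa, hwb] at hw

theorem IsIDCode.ncard_leaves_le_ncard_inter [Finite V] (hC : IsIDCode G C) {L : Set V}
    (hL : ∀ a ∈ L, G.neighborSet a = {u}) : L.ncard ≤ (C ∩ insert u L).ncard := by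
  by_cases huC : u ∈ C
  · have huL : u ∉ L := fun h ↦ ne_of_neighborSet_eq_singleton (hL u h) rfl
    calc L.ncard
      _ = (L ∩ C).ncard + (L \ C).ncard := (Set.ncard_inter_add_ncard_sdiff_eq_ncard L C).symm
      _ ≤ (L ∩ C).ncard + 1 := by
        gcongr
        exact Set.ncard_le_one_iff_subsingleton.2 (hC.subsingleton_leaves_sdiff hL)
      _ = (C ∩ insert u L).ncard := by
        rw [Set.inter_insert_of_mem huC, Set.inter_comm C L,
          Set.ncard_insert_of_notMem fun h ↦ huL h.1]
  · have hLC : L ⊆ C := fun a ha ↦ (hC.mem_or_mem_of_leaf (hL a ha)).resolve_right huC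
    exact Set.ncard_le_ncard (Set.subset_inter hLC (Set.subset_insert u L))

theorem IsIDCode.mem_or_mem_of_neighborSet_eq (hC : IsIDCode G C)
    (hu : G.neighborSet u = {x, a, b}) (hb : G.neighborSet b = {u}) : x ∈ C ∨ a ∈ C := by
  obtain ⟨w, hwC, hw⟩ := hC.exists_mem_not_iff (ne_of_neighborSet_eq_singleton hb).symm
  have hwxa : w = x ∨ w = a := by
    simp only [closedNbhd, hu, hb, Set.mem_insert_iff, Set.mem_singleton_iff] at hw
    tauto
  rcases hwxa with rfl | rfl
  exacts [.inl hwC, .inr hwC]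

/-- The star with centre `u` and `k + 1` leaves is appended onto `x` by one of its leaves:
`u` is adjacent to `x` and to exactly `k` further vertices, which are leaves of `G`. This is the
situation created by `appendStar`, seen inside the resulting graph. -/
structure IsAppendedStar (G : SimpleGraph V) (x u : V) (k : ℕ) : Prop where
  adj : G.Adj x u
  ncard_leaves : (G.neighborSet u \ {x}).ncard = k
  neighborSet_leaf : ∀ a ∈ G.neighborSet u \ {x}, G.neighborSet a = {u}

namespace IsAppendedStar

theorem closedNbhd_sdiff_singleton (hu : IsAppendedStar G x u k) :
    closedNbhd G u \ {x} = insert u (G.neighborSet u \ {x}) :=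
  Set.insert_sdiff_of_notMem _ hu.adj.ne'

theorem ncard_closedNbhd_sdiff_singleton [Finite V] (hu : IsAppendedStar G x u k) :
    (closedNbhd G u \ {x}).ncard = k + 1 := by
  rw [hu.closedNbhd_sdiff_singleton, Set.ncard_insert_of_notMem (by simp), hu.ncard_leaves]

theorem le_ncard_inter [Finite V] (hu : IsAppendedStar G x u k) (hC : IsIDCode G C) :
    k ≤ (C ∩ (closedNbhd G u \ {x})).ncard := by
  rw [← hu.ncard_leaves, hu.closedNbhd_sdiff_singleton]
  exact hC.ncard_leaves_le_ncard_inter hu.neighborSet_leaf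

theorem eq_or_neighborSet_eq_of_mem (hu : IsAppendedStar G x u k)
    (hw : w ∈ closedNbhd G u \ {x}) : w = u ∨ G.neighborSet w = {u} := by
  rw [hu.closedNbhd_sdiff_singleton] at hw
  exact hw.imp_right (hu.neighborSet_leaf w)

theorem disjoint_closedNbhd_sdiff_singleton {l : ℕ} (hu : IsAppendedStar G x u k)
    (hv : IsAppendedStar G x v l) (huv : u ≠ v) :
    Disjoint (closedNbhd G u \ {x}) (closedNbhd G v \ {x}) := by
  rw [Set.disjoint_left]
  intro w hwu hwv
  rcases hu.eq_or_neighborSet_eq_of_mem hwu with rfl | hwu <;>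
    rcases hv.eq_or_neighborSet_eq_of_mem hwv with rfl | hwv
  · exact huv rfl
  · exact neighborSet_ne_singleton_of_adj hu.adj hv.adj hwv
  · exact neighborSet_ne_singleton_of_adj hv.adj hu.adj hwu
  · exact huv (Set.singleton_injective (hwu.symm.trans hwv))

theorem leaves_subset (hu : IsAppendedStar G x u 2) (hC : IsIDCode G C) (hx : x ∉ C) :
    G.neighborSet u \ {x} ⊆ C := by
  obtain ⟨a, b, -, hab⟩ := Set.ncard_eq_two.1 hu.ncard_leaves
  have hnbr : G.neighborSet u = {x, a, b} := by
    have hxu : x ∈ G.neighborSet u := hu.adj.symm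
    rw [← hab, Set.insert_sdiff_singleton, Set.insert_eq_of_mem hxu]
  have ha : G.neighborSet a = {u} := hu.neighborSet_leaf a (by simp [hab])
  have hb : G.neighborSet b = {u} := hu.neighborSet_leaf b (by simp [hab])
  rw [hab]
  rintro _ (rfl | rfl)
  · exact (hC.mem_or_mem_of_neighborSet_eq hnbr hb).resolve_left hx
  · exact (hC.mem_or_mem_of_neighborSet_eq (hnbr.trans (by rw [Set.pair_comm])) ha).resolve_left hx

theorem three_le_ncard_inter [Finite V] (hu : IsAppendedStar G x u 2) (hC : IsIDCode G C)
    (hx : x ∉ C) (huC : u ∈ C) : 3 ≤ (C ∩ (closedNbhd G u \ {x})).ncard := by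
  have hsub : closedNbhd G u \ {x} ⊆ C := by
    rw [hu.closedNbhd_sdiff_singleton]
    exact Set.insert_subset huC (hu.leaves_subset hC hx)
  rw [Set.inter_eq_right.2 hsub, hu.ncard_closedNbhd_sdiff_singleton]

end IsAppendedStar

theorem sum_ncard_inter_le_of_isAppendedStar [Finite V] {s : Finset V} {k : V → ℕ}
    (hs : ∀ u ∈ s, IsAppendedStar G x u (k u)) (C : Set V) :
    ∑ u ∈ s, (C ∩ (closedNbhd G u \ {x})).ncard ≤ (C \ {x}).ncard := by
  have hdisj : (s : Set V).PairwiseDisjoint fun u ↦ C ∩ (closedNbhd G u \ {x}) :=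
    fun u hu v hv huv ↦ ((hs u hu).disjoint_closedNbhd_sdiff_singleton (hs v hv) huv).mono
      Set.inter_subset_right Set.inter_subset_right
  rw [← finsum_mem_coe_finset, ← s.finite_toSet.ncard_biUnion (fun _ _ ↦ Set.toFinite _) hdisj]
  exact Set.ncard_le_ncard (Set.iUnion₂_subset fun u _ ↦ by grind)

theorem IsIDCode.two_mul_degree_lt_ncard [Finite V] [Fintype (G.neighborSet x)]
    (hC : IsIDCode G C) (hx : ∀ u, G.Adj x u → IsAppendedStar G x u 2) :
    2 * G.degree x < C.ncard := by
  have hstar : ∀ u ∈ G.neighborFinset x, IsAppendedStar G x u 2 := by simpa using hx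
  have hle : ∀ u ∈ G.neighborFinset x, 2 ≤ (C ∩ (closedNbhd G u \ {x})).ncard :=
    fun u hu ↦ (hstar u hu).le_ncard_inter hC
  have hsum := sum_ncard_inter_le_of_isAppendedStar hstar C
  have hdeg : 2 * G.degree x = ∑ _u ∈ G.neighborFinset x, 2 := by simp [mul_comm]
  rw [hdeg]
  by_cases hxC : x ∈ C
  · calc ∑ _u ∈ G.neighborFinset x, 2
        ≤ ∑ u ∈ G.neighborFinset x, (C ∩ (closedNbhd G u \ {x})).ncard := Finset.sum_le_sum hle
      _ ≤ (C \ {x}).ncard := hsum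
      _ < C.ncard := Set.ncard_sdiff_singleton_lt_of_mem hxC
  · obtain ⟨u, huC, rfl | hxu⟩ := hC.exists_mem_closedNbhd x
    · exact absurd huC hxC
    calc ∑ _u ∈ G.neighborFinset x, 2
        < ∑ u ∈ G.neighborFinset x, (C ∩ (closedNbhd G u \ {x})).ncard :=
          Finset.sum_lt_sum hle
            ⟨u, by simpa using hxu, (hx u hxu).three_le_ncard_inter hC hxC huC⟩
      _ ≤ (C \ {x}).ncard := hsum
      _ ≤ C.ncard := Set.ncard_le_ncard Set.sdiff_subset

instance : DecidableRel T1graph.Adj := fun a b ↦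
  inferInstanceAs (Decidable (s(a, b) ∈ ({_, _, _, _, _, _} : Set (Sym2 (Fin 7))) ∧ a ≠ b))

theorem isAppendedStar_T1graph : ∀ u, T1graph.Adj 0 u → IsAppendedStar T1graph 0 u 2 := by
  intro u hu
  refine ⟨hu, ?_, ?_⟩
  · rw [Set.ncard_eq_toFinset_card']
    decide +revert
  · simp only [Set.ext_iff, Set.mem_sdiff, mem_neighborSet, Set.mem_singleton_iff]
    decide +revert

theorem degree_T1graph_zero : T1graph.degree 0 = 2 := by
  decide

theorem exists_isIDCode_T1graph_ncard_eq_five : ∃ C, IsIDCode T1graph C ∧ C.ncard = 5 := by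
  refine ⟨({0, 1, 2, 4, 5} : Finset (Fin 7)), ?_, ?_⟩
  · simp only [isIDCode_iff_forall_exists_mem, Finset.mem_coe]
    decide
  · rw [Set.ncard_coe_finset]
    rfl

/-- `γ^ID(T₁) = 5 = (2/3)·7 + 1/3`. -/
theorem stmt_14 : idNum T1graph = 5 ∧ (idNum T1graph : ℝ) = 2 / 3 * 7 + 1 / 3 := by
  obtain ⟨C, hC, hcard⟩ := exists_isIDCode_T1graph_ncard_eq_five
  have hmin (D : Set (Fin 7)) (hD : IsIDCode T1graph D) : C.ncard ≤ D.ncard := by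
    have hlt : 2 * T1graph.degree 0 < D.ncard := hD.two_mul_degree_lt_ncard isAppendedStar_T1graph
    rw [degree_T1graph_zero] at hlt
    lia
  have hid : idNum T1graph = 5 := (idNum_eq_ncard hC hmin).trans hcard
  refine ⟨hid, ?_⟩
  rw [hid]
  norm_num
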